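/- arXiv:1902.10970 — 3 statements merged into one kernel-verified Lean document; each statement's English description precedes it below -/
import Mathlib

section
/- Let B be the open unit ball in ℝ⁴ centered at the origin and let R ≥ 1. Then for every radial function w ∈ C₀^∞(B \ {0}), setting w̃(x) := E₁(|x|/R)^{−1/2} · w(x), one has ∫_B (Δw)² dx − ∫_B w(x)² / ( |x|⁴ · E₁(|x|/R)² ) dx ≥ 4 · ∫_B E₁(|x|/R) · |∇w̃(x)|² / |x|² dx. -/
/-! The polar-coordinate computation. Write `w x = v ‖x‖` with `v` smooth on `ℝ`, and `E r = 1 - log (r / R)`.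
Away from the origin `Δw = v'' + 3 v' / r` and `|∇w̃|² = (v' / √E + v / (2 r E ^ (3/2)))²`, so after
integrating over spheres all three integrals are one-dimensional with weight `r³`. The difference of the two sides
has the integrand
`r³ (v'' + v' / r)² + d/dr (2 r² v'² - 2 v² / E)`.
The total derivative integrates to zero because `v` vanishes near `0` and near `1`, and the
square is nonnegative. This one-dimensional estimate is `radial_inequality`; the reduction to it rests on
`lap_radial`, `gradient_term` and `integral_ball_radial`. -/

open MeasureTheory Real

/-- `E₁(t) = 1 - ln t`. -/
noncomputable def E1 (t : ℝ) : ℝ := 1 - Real.log t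

/-- `E₂(t) = ln (e E₁(t)) = 1 + ln E₁(t)`. -/
noncomputable def E2 (t : ℝ) : ℝ := 1 + Real.log (E1 t)

/-- The Euclidean Laplacian of a scalar function on `ℝⁿ`. -/
noncomputable def lap {n : ℕ} (f : EuclideanSpace ℝ (Fin n) → ℝ) :
    EuclideanSpace ℝ (Fin n) → ℝ := fun x =>
  ∑ i, fderiv ℝ (fun y => fderiv ℝ f y (EuclideanSpace.single i 1)) x (EuclideanSpace.single i 1)

/-! ### Differentiating radial functions -/

section RadialCalculus

variable {E : Type*} [NormedAddCommGroup E] [InnerProductSpace ℝ E]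

lemma hasFDerivAt_norm_of_ne {x : E} (hx : x ≠ 0) :
    HasFDerivAt (fun y : E => ‖y‖) (‖x‖⁻¹ • innerSL ℝ x) x := by
  have h := (hasStrictFDerivAt_norm_sq x).hasFDerivAt.sqrt (by simpa using hx)
  have hn : ‖x‖ ≠ 0 := by simpa using hx
  convert h using 1
  · ext y; simp
  · ext y
    simp
    field_simp

lemma hasFDerivAt_radial {x : E} (hx : x ≠ 0) {f : ℝ → ℝ} {f' : ℝ}
    (hf : HasDerivAt f f' ‖x‖) :
    HasFDerivAt (fun y : E => f ‖y‖) ((f' * ‖x‖⁻¹) • innerSL ℝ x) x := by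
  have h := hf.comp_hasFDerivAt x (hasFDerivAt_norm_of_ne hx)
  rw [smul_smul] at h
  exact h

end RadialCalculus

/-- The Laplacian of `x ↦ v ‖x‖` on `ℝ⁴ \ {0}` is `v'' + 3 v' / r`. -/
lemma lap_radial {v v1 v2 : ℝ → ℝ} (h1 : ∀ r, HasDerivAt v (v1 r) r)
    (h2 : ∀ r, HasDerivAt v1 (v2 r) r) {x : EuclideanSpace ℝ (Fin 4)} (hx : x ≠ 0) :
    lap (fun y => v ‖y‖) x = v2 ‖x‖ + 3 * v1 ‖x‖ / ‖x‖ := by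
  have hn : ‖x‖ ≠ 0 := by simpa using hx
  have key : ∀ i : Fin 4, fderiv ℝ (fun y : EuclideanSpace ℝ (Fin 4) =>
      fderiv ℝ (fun z : EuclideanSpace ℝ (Fin 4) => v ‖z‖) y (EuclideanSpace.single i 1)) x
        (EuclideanSpace.single i 1) =
      (v2 ‖x‖ * ‖x‖ - v1 ‖x‖) / ‖x‖ ^ 2 * ‖x‖⁻¹ * (x i) ^ 2 + v1 ‖x‖ / ‖x‖ := by
    intro i
    have hev : (fun y : EuclideanSpace ℝ (Fin 4) =>
        fderiv ℝ (fun z : EuclideanSpace ℝ (Fin 4) => v ‖z‖) y (EuclideanSpace.single i 1))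
        =ᶠ[nhds x] fun y => (fun r => v1 r / r) ‖y‖ * y i := by
      filter_upwards [isOpen_ne.mem_nhds hx] with y hy
      rw [(hasFDerivAt_radial hy (h1 _)).fderiv]
      simp [EuclideanSpace.inner_single_right]
      left
      ring
    rw [hev.fderiv_eq]
    have hq : HasDerivAt (fun r => v1 r / r) ((v2 ‖x‖ * ‖x‖ - v1 ‖x‖) / ‖x‖ ^ 2) ‖x‖ := by
      have := (h2 ‖x‖).div (hasDerivAt_id ‖x‖) hn
      simp only [id, mul_one] at this
      exact this
    have hc : HasFDerivAt (fun y : EuclideanSpace ℝ (Fin 4) => y i)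
        (EuclideanSpace.proj i : EuclideanSpace ℝ (Fin 4) →L[ℝ] ℝ) x :=
      (EuclideanSpace.proj i : EuclideanSpace ℝ (Fin 4) →L[ℝ] ℝ).hasFDerivAt
    have hm := ((hasFDerivAt_radial hx hq).mul hc).fderiv
    change fderiv ℝ (fun y : EuclideanSpace ℝ (Fin 4) => v1 ‖y‖ / ‖y‖ * y i) x = _ at hm
    rw [hm]
    simp [EuclideanSpace.inner_single_right]
    ring
  unfold lap
  simp_rw [key]
  rw [Finset.sum_add_distrib, ← Finset.mul_sum]
  have hs : ∑ i, (x i) ^ 2 = ‖x‖ ^ 2 := by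
    rw [EuclideanSpace.norm_sq_eq]; simp
  rw [hs]
  simp
  field_simp
  ring

lemma E1_pos {R r : ℝ} (hR : 1 ≤ R) (h0 : 0 < r) (h1 : r ≤ 1) : 0 < E1 (r / R) := by
  have : Real.log (r / R) ≤ 0 :=
    Real.log_nonpos (by positivity) (by rw [div_le_one (by linarith)]; linarith)
  unfold E1; linarith

lemma hasDerivAt_E1 {R r : ℝ} (hR : 1 ≤ R) (h0 : 0 < r) :
    HasDerivAt (fun s => E1 (s / R)) (-r⁻¹) r := by
  have hR0 : R ≠ 0 := by linarith
  have h := (((hasDerivAt_id r).div_const R).log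
    (div_ne_zero h0.ne' hR0)).const_sub 1
  refine h.congr_deriv ?_
  simp
  field_simp

/-- The weighted gradient integrand of `w̃ = E₁^{-1/2} w`, expressed through the profile of `w`. -/
lemma gradient_term {R : ℝ} (hR : 1 ≤ R) {v v1 : ℝ → ℝ} (h1 : ∀ r, HasDerivAt v (v1 r) r)
    {x : EuclideanSpace ℝ (Fin 4)} (hx : x ≠ 0) (hx1 : ‖x‖ ≤ 1) :
    E1 (‖x‖ / R) *
        ‖gradient (fun y : EuclideanSpace ℝ (Fin 4) =>
          (E1 (‖y‖ / R)) ^ (-(1 / 2) : ℝ) * v ‖y‖) x‖ ^ 2 / ‖x‖ ^ 2 =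
      (v1 ‖x‖ + v ‖x‖ / (2 * ‖x‖ * E1 (‖x‖ / R))) ^ 2 / ‖x‖ ^ 2 := by
  have hn : 0 < ‖x‖ := by simpa using hx
  have hE := E1_pos hR hn hx1
  have hd := ((hasDerivAt_E1 hR hn).rpow_const (p := (-(1 / 2) : ℝ)) (Or.inl hE.ne')).mul (h1 ‖x‖)
  have hF := hasFDerivAt_radial hx hd
  set e := E1 (‖x‖ / R) with he
  have hrw : e ^ (-(1 / 2) - 1 : ℝ) = e ^ (-(1 / 2) : ℝ) / e := by
    rw [Real.rpow_sub hE, Real.rpow_one]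
  have hsq : (e ^ (-(1 / 2) : ℝ)) ^ 2 = e⁻¹ := by
    rw [← Real.rpow_natCast, ← Real.rpow_mul hE.le]
    norm_num
    exact Real.rpow_neg_one e
  have hG : ‖gradient (fun y : EuclideanSpace ℝ (Fin 4) =>
          (E1 (‖y‖ / R)) ^ (-(1 / 2) : ℝ) * v ‖y‖) x‖ =
      |e ^ (-(1 / 2) : ℝ) * (v1 ‖x‖ + v ‖x‖ / (2 * ‖x‖ * e))| := by
    have hF' := hF.fderiv
    simp only [Pi.mul_apply] at hF'
    rw [gradient, LinearIsometryEquiv.norm_map, hF', norm_smul, innerSL_apply_norm,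
      Real.norm_eq_abs]
    rw [hrw]
    rw [abs_mul, abs_of_pos (inv_pos.mpr hn), mul_assoc, inv_mul_cancel₀ hn.ne', mul_one]
    congr 1
    field_simp
    ring
  rw [hG, sq_abs, mul_pow, hsq]
  field_simp

/-! ### Reduction to one dimension -/

/-- Integration in polar coordinates on the unit ball of `ℝ⁴`. -/
lemma integral_ball_radial : ∃ c : ℝ, 0 ≤ c ∧
    ∀ (F : EuclideanSpace ℝ (Fin 4) → ℝ) (G : ℝ → ℝ),
      (∀ x, x ≠ 0 → ‖x‖ < 1 → F x = G ‖x‖) →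
      ∫ x in Metric.ball (0 : EuclideanSpace ℝ (Fin 4)) 1, F x =
        c * ∫ r in Set.Ioo (0 : ℝ) 1, r ^ 3 * G r := by
  refine ⟨4 * (volume : Measure (EuclideanSpace ℝ (Fin 4))).real (Metric.ball 0 1),
    by positivity, fun F G h => ?_⟩
  have h0 : ∫ x in Metric.ball (0 : EuclideanSpace ℝ (Fin 4)) 1, F x =
      ∫ x : EuclideanSpace ℝ (Fin 4), (Set.Iio (1 : ℝ)).indicator G ‖x‖ := by
    rw [← integral_indicator measurableSet_ball]
    refine integral_congr_ae ?_
    filter_upwards [compl_mem_ae_iff.mpr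
      (measure_singleton (μ := volume) (0 : EuclideanSpace ℝ (Fin 4)))] with x hx
    have hx0 : x ≠ 0 := by simpa using hx
    by_cases hx1 : ‖x‖ < 1
    · simp [Set.indicator, hx1, h x hx0 hx1]
    · simp [Set.indicator, hx1]
  rw [h0, integral_fun_norm_addHaar volume]
  have h3 : ∫ y in Set.Ioi (0 : ℝ), y ^ (4 - 1) • (Set.Iio (1 : ℝ)).indicator G y =
      ∫ r in Set.Ioo (0 : ℝ) 1, r ^ 3 * G r := by
    rw [← Set.Ioi_inter_Iio, ← setIntegral_indicator measurableSet_Iio]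
    congr 1
    ext y
    by_cases hy : y < 1 <;> simp [Set.indicator, hy]
  have hdim : Module.finrank ℝ (EuclideanSpace ℝ (Fin 4)) = 4 := by simp
  rw [hdim, h3]
  simp [mul_assoc]

/-- The one-dimensional inequality for a profile supported in `[a, b] ⊂ (0, 1)`: right side minus
left side is `∫ r³ (v'' + v' / r)²`, up to a total derivative that integrates to zero. -/
lemma radial_inequality {R : ℝ} (hR : 1 ≤ R) {v v1 v2 : ℝ → ℝ}
    (h1 : ∀ r, HasDerivAt v (v1 r) r) (h2 : ∀ r, HasDerivAt v1 (v2 r) r) (hc : Continuous v2)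
    {a b : ℝ} (ha : 0 < a) (hab : a ≤ b) (hb : b < 1)
    (hz : ∀ r, 0 < r → r ∉ Set.Ioo a b → v r = 0 ∧ v1 r = 0 ∧ v2 r = 0) :
    4 * ∫ r in Set.Ioo (0 : ℝ) 1,
        r ^ 3 * ((v1 r + v r / (2 * r * E1 (r / R))) ^ 2 / r ^ 2) ≤
      (∫ r in Set.Ioo (0 : ℝ) 1, r ^ 3 * (v2 r + 3 * v1 r / r) ^ 2) -
        ∫ r in Set.Ioo (0 : ℝ) 1, r ^ 3 * (v r ^ 2 / (r ^ 4 * E1 (r / R) ^ 2)) := by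
  have hred : ∀ H : ℝ → ℝ, (∀ r, 0 < r → r ∉ Set.Ioo a b → H r = 0) →
      ∫ r in Set.Ioo (0 : ℝ) 1, H r = ∫ r in a..b, H r := by
    intro H hH
    rw [intervalIntegral.integral_of_le hab]
    refine setIntegral_eq_of_subset_of_forall_sdiff_eq_zero measurableSet_Ioo ?_ ?_
    · exact fun r hr => Set.mem_Ioo.mpr ⟨ha.trans hr.1, lt_of_le_of_lt hr.2 hb⟩
    · exact fun r hr => hH r hr.1.1 fun h => hr.2 (Set.Ioo_subset_Ioc_self h)
  have hpos : ∀ r ∈ Set.Icc a b, 0 < r := fun r hr => ha.trans_le hr.1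
  have hE : ∀ r ∈ Set.Icc a b, 0 < E1 (r / R) := fun r hr =>
    E1_pos hR (hpos r hr) (hr.2.trans hb.le)
  have cv : ContinuousOn v (Set.Icc a b) := fun r _ => (h1 r).continuousAt.continuousWithinAt
  have cv1 : ContinuousOn v1 (Set.Icc a b) := fun r _ => (h2 r).continuousAt.continuousWithinAt
  have cv2 : ContinuousOn v2 (Set.Icc a b) := hc.continuousOn
  have cE : ContinuousOn (fun r => E1 (r / R)) (Set.Icc a b) := fun r hr =>
    (hasDerivAt_E1 hR (hpos r hr)).continuousAt.continuousWithinAt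
  have nr : ∀ r ∈ Set.Icc a b, r ≠ 0 := fun r hr => (hpos r hr).ne'
  have nE : ∀ r ∈ Set.Icc a b, E1 (r / R) ≠ 0 := fun r hr => (hE r hr).ne'
  have cid : ContinuousOn (fun r : ℝ => r) (Set.Icc a b) := continuousOn_id
  rw [hred _ fun r h h' => by obtain ⟨e1, e2, e3⟩ := hz r h h'; simp [e1, e2],
    hred _ fun r h h' => by obtain ⟨e1, e2, e3⟩ := hz r h h'; simp [e2, e3],
    hred _ fun r h h' => by obtain ⟨e1, e2, e3⟩ := hz r h h'; simp [e1]]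
  have iC : IntervalIntegrable
      (fun r => r ^ 3 * ((v1 r + v r / (2 * r * E1 (r / R))) ^ 2 / r ^ 2)) volume a b := by
    refine ContinuousOn.intervalIntegrable_of_Icc hab ((cid.pow 3).mul (((cv1.add (cv.div
      ((continuousOn_const.mul cid).mul cE) ?_)).pow 2).div (cid.pow 2) ?_))
    · exact fun r hr => mul_ne_zero (mul_ne_zero two_ne_zero (nr r hr)) (nE r hr)
    · exact fun r hr => pow_ne_zero _ (nr r hr)
  have iA : IntervalIntegrable
      (fun r => r ^ 3 * (v2 r + 3 * v1 r / r) ^ 2) volume a b :=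
    ContinuousOn.intervalIntegrable_of_Icc hab ((cid.pow 3).mul ((cv2.add
      ((continuousOn_const.mul cv1).div cid nr)).pow 2))
  have iB : IntervalIntegrable
      (fun r => r ^ 3 * (v r ^ 2 / (r ^ 4 * E1 (r / R) ^ 2))) volume a b :=
    ContinuousOn.intervalIntegrable_of_Icc hab ((cid.pow 3).mul ((cv.pow 2).div
      ((cid.pow 4).mul (cE.pow 2))
      fun r hr => mul_ne_zero (pow_ne_zero _ (nr r hr)) (pow_ne_zero _ (nE r hr))))
  -- `P'` is the derivative of `2 r² v'² - 2 v² / E`, the exact part of the integrand.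
  set P' : ℝ → ℝ := fun r => 4 * r * v1 r ^ 2 + 4 * r ^ 2 * v1 r * v2 r
    - (4 * v r * v1 r / E1 (r / R) + 2 * v r ^ 2 / (r * E1 (r / R) ^ 2)) with hP'
  have iP : IntervalIntegrable P' volume a b := by
    refine ContinuousOn.intervalIntegrable_of_Icc hab
      ((((continuousOn_const.mul cid).mul (cv1.pow 2)).add
        (((continuousOn_const.mul (cid.pow 2)).mul cv1).mul cv2)).sub
        ((((continuousOn_const.mul cv).mul cv1).div cE nE).add
        ((continuousOn_const.mul (cv.pow 2)).div (cid.mul (cE.pow 2)) ?_)))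
    exact fun r hr => mul_ne_zero (nr r hr) (pow_ne_zero _ (nE r hr))
  have hP : ∫ r in a..b, P' r = 0 := by
    have hd : ∀ r ∈ Set.uIcc a b, HasDerivAt
        (fun r => 2 * r ^ 2 * v1 r ^ 2 - 2 * v r ^ 2 / E1 (r / R)) (P' r) r := by
      intro r hr
      rw [Set.uIcc_of_le hab] at hr
      have hrn := nr r hr
      have hEn := nE r hr
      have := ((((hasDerivAt_id r).pow 2).const_mul 2).mul ((h2 r).pow 2)).sub
        ((((h1 r).pow 2).const_mul 2).div (hasDerivAt_E1 hR (hpos r hr)) hEn)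
      refine this.congr_deriv ?_
      simp [hP']
      field_simp
      ring
    rw [intervalIntegral.integral_eq_sub_of_hasDerivAt hd iP]
    obtain ⟨e1, e2, -⟩ := hz a ha (by simp)
    obtain ⟨f1, f2, -⟩ := hz b (ha.trans_le hab) (by simp)
    simp [e1, e2, f1, f2]
  rw [← intervalIntegral.integral_sub iA iB, ← intervalIntegral.integral_const_mul]
  have := intervalIntegral.integral_mono_on hab ((iC.const_mul 4).add iP) (iA.sub iB)
    (fun r hr => by
      have hrn := nr r hr
      have hEn := nE r hr
      have hsq : 0 ≤ r ^ 3 * (v2 r + v1 r / r) ^ 2 := by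
        have := hpos r hr
        positivity
      have : r ^ 3 * (v2 r + 3 * v1 r / r) ^ 2 - r ^ 3 * (v r ^ 2 / (r ^ 4 * E1 (r / R) ^ 2))
          - (4 * (r ^ 3 * ((v1 r + v r / (2 * r * E1 (r / R))) ^ 2 / r ^ 2)) + P' r)
          = r ^ 3 * (v2 r + v1 r / r) ^ 2 := by
        simp only [hP']
        field_simp
        ring
      linarith)
  rw [intervalIntegral.integral_add (iC.const_mul 4) iP, hP, add_zero] at this
  exact this

/-! ### The inequality on the ball -/

/-- A compact subset of the punctured unit ball lies in a smaller open annulus. -/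
lemma exists_annulus {K : Set (EuclideanSpace ℝ (Fin 4))} (hK : IsCompact K)
    (hsub : K ⊆ Metric.ball 0 1 \ {0}) :
    ∃ a b : ℝ, 0 < a ∧ a ≤ b ∧ b < 1 ∧ ∀ x ∈ K, ‖x‖ ∈ Set.Ioo a b := by
  -- Adding the radius `1/2` keeps the compact set of radii nonempty.
  have hc : IsCompact (insert (1 / 2 : ℝ) ((fun x => ‖x‖) '' K)) :=
    (hK.image continuous_norm).insert _
  have hin : ∀ r ∈ insert (1 / 2 : ℝ) ((fun x => ‖x‖) '' K), 0 < r ∧ r < 1 := by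
    rintro r (rfl | ⟨x, hx, rfl⟩)
    · norm_num
    · have := hsub hx
      simp at this
      exact ⟨by simpa using this.2, this.1⟩
  obtain ⟨m, hm, hm'⟩ := hc.exists_isLeast ⟨_, Set.mem_insert _ _⟩
  obtain ⟨M, hM, hM'⟩ := hc.exists_isGreatest ⟨_, Set.mem_insert _ _⟩
  have h1 := hin m hm
  have h2 := hin M hM
  have h3 := hm' hM
  refine ⟨m / 2, (M + 1) / 2, by linarith, by linarith, by linarith, fun x hx => ?_⟩
  have hmem : ‖x‖ ∈ insert (1 / 2 : ℝ) ((fun x => ‖x‖) '' K) := Or.inr ⟨x, hx, rfl⟩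
  have h4 := hm' hmem
  have h5 := hM' hmem
  constructor <;> linarith

/-- Weighted critical Rellich estimate with gradient remainder for radial functions. -/
theorem stmt10 (R : ℝ) (hR : 1 ≤ R)
    (w : EuclideanSpace ℝ (Fin 4) → ℝ) (hsmooth : ContDiff ℝ (⊤ : ℕ∞) w)
    (hcpt : HasCompactSupport w)
    (hsupp : tsupport w ⊆ Metric.ball 0 1 \ {0}) (hrad : ∃ g : ℝ → ℝ, ∀ x, w x = g ‖x‖) :
    4 * ∫ x in Metric.ball (0 : EuclideanSpace ℝ (Fin 4)) 1, E1 (‖x‖ / R) *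
        ‖gradient (fun y => (E1 (‖y‖ / R)) ^ (-(1 / 2) : ℝ) * w y) x‖ ^ 2 / ‖x‖ ^ 2 ≤
      (∫ x in Metric.ball (0 : EuclideanSpace ℝ (Fin 4)) 1, (lap w x) ^ 2) -
        ∫ x in Metric.ball (0 : EuclideanSpace ℝ (Fin 4)) 1,
          (w x) ^ 2 / (‖x‖ ^ 4 * (E1 (‖x‖ / R)) ^ 2) := by
  obtain ⟨g, hg⟩ := hrad
  -- The profile is the restriction of `w` to a coordinate axis, hence smooth on all of `ℝ`.
  set v : ℝ → ℝ := fun r => w (EuclideanSpace.single 0 r) with hv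
  have hw : w = fun x => v ‖x‖ := by
    funext x
    simp only [hv]
    rw [hg, hg (EuclideanSpace.single 0 ‖x‖)]
    simp
  have hline : (fun r : ℝ => (EuclideanSpace.single 0 r : EuclideanSpace ℝ (Fin 4))) =
      fun r : ℝ => r • EuclideanSpace.single 0 1 := by
    funext r; ext i; simp
  have hcont : ContDiff ℝ (⊤ : ℕ∞)
      (fun r : ℝ => (EuclideanSpace.single 0 r : EuclideanSpace ℝ (Fin 4))) := by
    rw [hline]
    fun_prop
  have hvs : ContDiff ℝ (⊤ : ℕ∞) v := hsmooth.comp hcont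
  have hvs1 : ContDiff ℝ (⊤ : ℕ∞) (deriv v) := (contDiff_infty_iff_deriv.mp hvs).2
  have hvs2 : ContDiff ℝ (⊤ : ℕ∞) (deriv (deriv v)) := (contDiff_infty_iff_deriv.mp hvs1).2
  have h1 : ∀ r, HasDerivAt v (deriv v r) r := fun r =>
    ((contDiff_infty_iff_deriv.mp hvs).1 r).hasDerivAt
  have h2 : ∀ r, HasDerivAt (deriv v) (deriv (deriv v) r) r := fun r =>
    ((contDiff_infty_iff_deriv.mp hvs1).1 r).hasDerivAt
  obtain ⟨a, b, ha, hab, hb, hK⟩ := exists_annulus hcpt hsupp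
  have hvt : ∀ r, 0 < r → r ∉ Set.Ioo a b → v =ᶠ[nhds r] 0 := by
    intro r hr hr'
    have hx : (EuclideanSpace.single 0 r : EuclideanSpace ℝ (Fin 4)) ∉ tsupport w := by
      intro h
      have := hK _ h
      rw [PiLp.norm_single, Real.norm_of_nonneg hr.le] at this
      exact hr' this
    have hev := notMem_tsupport_iff_eventuallyEq.mp hx
    exact hcont.continuous.continuousAt.eventually hev
  have hz : ∀ r, 0 < r → r ∉ Set.Ioo a b →
      v r = 0 ∧ deriv v r = 0 ∧ deriv (deriv v) r = 0 := by
    intro r hr hr'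
    have e0 := hvt r hr hr'
    have e1 := e0.deriv
    have e2 := e1.deriv
    refine ⟨e0.eq_of_nhds, ?_, ?_⟩
    · simpa using e1.eq_of_nhds
    · rw [e2.eq_of_nhds]
      have : deriv (0 : ℝ → ℝ) = 0 := by ext; simp
      simp [this]
  obtain ⟨c, hc0, hc⟩ := integral_ball_radial
  have key := radial_inequality hR h1 h2 hvs2.continuous ha hab hb hz
  rw [hc _ (fun r => (deriv v r + v r / (2 * r * E1 (r / R))) ^ 2 / r ^ 2)
      (fun x hx hx1 => by rw [hw]; exact gradient_term hR h1 hx hx1.le),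
    hc _ (fun r => (deriv (deriv v) r + 3 * deriv v r / r) ^ 2)
      (fun x hx _ => by rw [hw, lap_radial h1 h2 hx]),
    hc _ (fun r => (v r) ^ 2 / (r ^ 4 * E1 (r / R) ^ 2)) (fun x hx _ => by rw [hw])]
  have := mul_le_mul_of_nonneg_left key hc0
  linarith
end

section
/- Let B be the open unit ball in ℝ⁴ centered at the origin and let R ≥ 1. Then for every radial function w ∈ C₀^∞(B \ {0}), setting w̃(x) := E₁(|x|/R)^{−1/2} · w(x), one has the identity ∫_B |∇w(x)|² / |x|² dx = (1/4) · ∫_B w(x)² / ( |x|⁴ · E₁(|x|/R)² ) dx + ∫_B E₁(|x|/R) · |∇w̃(x)|² / |x|² dx. -/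
/-!
Write `E(x) = E1(|x|/R)`, so that `∇E = -x/|x|²` and `E ≥ 1` on the punctured ball. Expanding the
gradient of `E^{-1/2} w` and its square gives, pointwise on the ball,
`E |∇(E^{-1/2} w)|² / |x|² = |∇w|² / |x|² - w² / (4 |x|⁴ E²) + (1/2) div (h x)` with
`h = w² / (E |x|⁴)` (`pointwise_identity`); here the dimension `4` enters through
`div (h x) = Dh(x) x + 4 h`, equivalently through `div (x/|x|⁴) = 0` off the origin. The function
`h` is `C¹` with compact support in the punctured ball, so the divergence integrates to zero
(`integral_euler_eq_zero`) and the identity follows. Radiality of `w` plays no role in this argument.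
-/


open MeasureTheory Real

local notation "V" => EuclideanSpace ℝ (Fin 4)

lemma E1_pos_s11 {R : ℝ} (hR : 1 ≤ R) {x : V} (hx : x ∈ Metric.ball (0 : V) 1) :
    0 < E1 (‖x‖ / R) := by
  have h1 : ‖x‖ < 1 := by simpa using hx
  have h2 : Real.log (‖x‖ / R) ≤ 0 :=
    Real.log_nonpos (by positivity) ((div_le_one (by linarith)).2 (by linarith))
  unfold E1
  linarith

/-- `∇ E1(|x|/R) = -x/|x|²` off the origin. -/
lemma hasFDerivAt_E1 {R : ℝ} (hR : 1 ≤ R) {x : V} (hx : x ≠ 0) :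
    HasFDerivAt (fun y : V => E1 (‖y‖ / R)) (-(‖x‖ ^ 2)⁻¹ • innerSL ℝ x) x := by
  have hn : ‖x‖ ^ 2 ≠ 0 := by positivity
  have h1 : HasFDerivAt (fun y : V => 1 + Real.log R - 1 / 2 * Real.log (‖y‖ ^ 2))
      (-((1 / 2 : ℝ) • ((‖x‖ ^ 2)⁻¹ • (2 • innerSL ℝ x)))) x :=
    (((hasStrictFDerivAt_norm_sq x).hasFDerivAt.log hn).const_mul (1 / 2)).const_sub _
  refine (h1.congr_of_eventuallyEq ?_).congr_fderiv ?_
  · filter_upwards [isOpen_ne.mem_nhds hx] with y hy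
    have hy' : ‖y‖ ≠ 0 := norm_ne_zero_iff.2 hy
    rw [E1, Real.log_div hy' (by linarith), Real.log_pow]
    push_cast
    ring
  · ext v
    simp
    ring

lemma contDiffAt_E1 {R : ℝ} (hR : 1 ≤ R) {x : V} (hx : x ≠ 0) :
    ContDiffAt ℝ 1 (fun y : V => E1 (‖y‖ / R)) x := by
  unfold E1
  have hn : ‖x‖ / R ≠ 0 := div_ne_zero (norm_ne_zero_iff.2 hx) (by linarith)
  exact contDiffAt_const.sub (((contDiffAt_norm ℝ hx).div_const R).log hn)

/-- `∫ div (h(x) x) dx = 0` in `ℝ⁴`, with the divergence expanded as `Dh(x) x + 4 h(x)`. -/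
lemma integral_euler_eq_zero {h : V → ℝ} (hh : ContDiff ℝ 1 h) (hc : HasCompactSupport h) :
    ∫ x, (fderiv ℝ h x x + 4 * h x) = 0 := by
  have hcont : Continuous (fderiv ℝ h) := hh.continuous_fderiv (by norm_num)
  have hint : Integrable h := hh.continuous.integrable_of_hasCompactSupport hc
  have hd (i : Fin 4) : Integrable
      (fun x : V => x i * fderiv ℝ h x (EuclideanSpace.single i 1)) := by
    refine Continuous.integrable_of_hasCompactSupport (by fun_prop) ?_
    exact (hc.fderiv_apply ℝ (EuclideanSpace.single i 1)).mul_left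
  have hpr (i : Fin 4) (x : V) :
      fderiv ℝ (fun x : V => x i) x (EuclideanSpace.single i 1) = 1 := by
    have : HasFDerivAt (fun x : V => x i) (EuclideanSpace.proj i : V →L[ℝ] ℝ) x :=
      (EuclideanSpace.proj i : V →L[ℝ] ℝ).hasFDerivAt
    rw [this.fderiv]
    simp
  have key (i : Fin 4) :
      ∫ x : V, x i * fderiv ℝ h x (EuclideanSpace.single i 1) = - ∫ x, h x := by
    rw [integral_mul_fderiv_eq_neg_fderiv_mul_of_integrable (f := fun x : V => x i)]
    · simp only [hpr, one_mul]
    · simpa only [hpr, one_mul] using hint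
    · exact hd i
    · exact Continuous.integrable_of_hasCompactSupport
        (by have := hh.continuous; fun_prop) hc.mul_left
    · intro x _
      exact (EuclideanSpace.proj i : V →L[ℝ] ℝ).differentiableAt
    · intro x _
      exact hh.differentiable (by norm_num) x
  have hsum (x : V) : fderiv ℝ h x x =
      ∑ i, x i * fderiv ℝ h x (EuclideanSpace.single i 1) := by
    have hx : x = ∑ i, x i • EuclideanSpace.single i (1 : ℝ) := by
      ext j
      simp [Finset.sum_apply, Pi.single_apply]
    conv_lhs => rw [hx]
    rw [map_sum, ← hx]
    simp
  simp_rw [hsum]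
  rw [integral_add (integrable_finsetSum _ fun i _ => hd i) (hint.const_mul 4),
    integral_finsetSum _ fun i _ => hd i, integral_const_mul]
  simp [key]

/-- The density `w² / (E1(|x|/R) |x|⁴)`; multiplied by the position vector it is the vector field
whose divergence is the error term of the ground state substitution. -/
noncomputable def fluxDensity (R : ℝ) (w : V → ℝ) (x : V) : ℝ :=
  w x ^ 2 * ((E1 (‖x‖ / R))⁻¹ * ((‖x‖ ^ 2)⁻¹ * (‖x‖ ^ 2)⁻¹))

lemma fderiv_fluxDensity_self {R : ℝ} (hR : 1 ≤ R) {w : V → ℝ} {x : V}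
    (hw : DifferentiableAt ℝ w x) (hx0 : x ≠ 0) (hx : x ∈ Metric.ball (0 : V) 1) :
    fderiv ℝ (fluxDensity R w) x x + 4 * fluxDensity R w x =
      2 * w x * fderiv ℝ w x x * ((E1 (‖x‖ / R))⁻¹ * (‖x‖ ^ 4)⁻¹) +
        w x ^ 2 * (((E1 (‖x‖ / R)) ^ 2)⁻¹ * (‖x‖ ^ 4)⁻¹) := by
  have hE := (E1_pos_s11 hR hx).ne'
  have hn : ‖x‖ ≠ 0 := norm_ne_zero_iff.2 hx0
  have hn2 : ‖x‖ ^ 2 ≠ 0 := by positivity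
  have h1 := (hasDerivAt_inv hE).comp_hasFDerivAt x (hasFDerivAt_E1 hR hx0)
  have h2 := (hasDerivAt_inv hn2).comp_hasFDerivAt x (hasStrictFDerivAt_norm_sq x).hasFDerivAt
  have h3 := (hw.hasFDerivAt.pow 2).mul (h1.mul (h2.mul h2))
  have h4 : HasFDerivAt (fluxDensity R w) _ x := h3
  rw [h4.fderiv]
  simp [fluxDensity]
  field_simp
  ring

/-- The expanded square of the ground state substitution. It holds at the origin too, where every
term is `0` because division by `0` yields `0`. -/
lemma pointwise_identity {R : ℝ} (hR : 1 ≤ R) {w : V → ℝ} {x : V}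
    (hw : DifferentiableAt ℝ w x) (hx : x ∈ Metric.ball (0 : V) 1) :
    E1 (‖x‖ / R) *
        ‖gradient (fun y => (E1 (‖y‖ / R)) ^ (-(1 / 2) : ℝ) * w y) x‖ ^ 2 / ‖x‖ ^ 2 =
      ‖gradient w x‖ ^ 2 / ‖x‖ ^ 2 -
          1 / 4 * ((w x) ^ 2 / (‖x‖ ^ 4 * (E1 (‖x‖ / R)) ^ 2)) +
        1 / 2 * (fderiv ℝ (fluxDensity R w) x x + 4 * fluxDensity R w x) := by
  rcases eq_or_ne x 0 with rfl | hx0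
  · simp [fluxDensity]
  rw [fderiv_fluxDensity_self hR hw hx0 hx]
  have hE := E1_pos_s11 hR hx
  have hn : ‖x‖ ≠ 0 := norm_ne_zero_iff.2 hx0
  have hgw : inner ℝ (gradient w x) x = fderiv ℝ w x x := by
    rw [← InnerProductSpace.toDual_apply_apply, toDual_gradient]
  have h1 := ((hasFDerivAt_E1 hR hx0).rpow_const (p := -(1 / 2)) (Or.inl hE.ne')).mul
    hw.hasFDerivAt
  have hgrad : gradient (fun y => (E1 (‖y‖ / R)) ^ (-(1 / 2) : ℝ) * w y) x =
      (E1 (‖x‖ / R)) ^ (-(1 / 2) : ℝ) • (gradient w x +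
        (1 / 2 * (E1 (‖x‖ / R))⁻¹ * w x * (‖x‖ ^ 2)⁻¹) • x) := by
    refine HasGradientAt.gradient ?_
    rw [hasGradientAt_iff_hasFDerivAt]
    refine h1.congr_fderiv ?_
    ext v
    rw [Real.rpow_sub_one hE.ne']
    simp
    ring
  have hs : ((E1 (‖x‖ / R)) ^ (-(1 / 2) : ℝ)) ^ 2 = (E1 (‖x‖ / R))⁻¹ := by
    rw [← Real.rpow_natCast, ← Real.rpow_mul hE.le]
    norm_num
    exact Real.rpow_neg_one _
  rw [hgrad, norm_smul, mul_pow, Real.norm_eq_abs, sq_abs, hs, norm_add_sq_real,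
    inner_smul_right, hgw, norm_smul, mul_pow, Real.norm_eq_abs, sq_abs]
  have hE' := hE.ne'
  field_simp
  ring

/-- Only continuity at the points of the compact set `tsupport w` has to be checked for functions
vanishing off it; this disposes of the singularities at the origin and outside the ball. -/
lemma integrable_of_tsupport {w f : V → ℝ} (hcpt : HasCompactSupport w)
    (hc : ∀ x ∈ tsupport w, ContinuousAt f x) (h0 : ∀ x ∉ tsupport w, f x = 0) :
    Integrable f := by
  refine Continuous.integrable_of_hasCompactSupport ?_ (HasCompactSupport.intro hcpt h0)
  refine continuous_iff_continuousAt.2 fun x => ?_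
  by_cases hx : x ∈ tsupport w
  · exact hc x hx
  · refine (continuousAt_const (y := (0 : ℝ))).congr ?_
    filter_upwards [(isClosed_tsupport w).isOpen_compl.mem_nhds hx] with y hy
    exact (h0 y hy).symm

/-- Ground state identity for the weighted gradient integral. -/
theorem stmt11 (R : ℝ) (hR : 1 ≤ R)
    (w : EuclideanSpace ℝ (Fin 4) → ℝ) (hsmooth : ContDiff ℝ (⊤ : ℕ∞) w)
    (hcpt : HasCompactSupport w)
    (hsupp : tsupport w ⊆ Metric.ball 0 1 \ {0}) (hrad : ∃ g : ℝ → ℝ, ∀ x, w x = g ‖x‖) :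
    (∫ x in Metric.ball (0 : EuclideanSpace ℝ (Fin 4)) 1, ‖gradient w x‖ ^ 2 / ‖x‖ ^ 2) =
      1 / 4 * (∫ x in Metric.ball (0 : EuclideanSpace ℝ (Fin 4)) 1,
          (w x) ^ 2 / (‖x‖ ^ 4 * (E1 (‖x‖ / R)) ^ 2)) +
        ∫ x in Metric.ball (0 : EuclideanSpace ℝ (Fin 4)) 1, E1 (‖x‖ / R) *
          ‖gradient (fun y => (E1 (‖y‖ / R)) ^ (-(1 / 2) : ℝ) * w y) x‖ ^ 2 / ‖x‖ ^ 2 := by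
  have hw1 : ContDiff ℝ 1 w := hsmooth.of_le (by exact_mod_cast le_top)
  have hw0 : ∀ x ∉ tsupport w, w x = 0 := fun x hx => image_eq_zero_of_notMem_tsupport hx
  have hne : ∀ x ∈ tsupport w, x ≠ 0 := fun x hx => (hsupp hx).2
  have hball : ∀ x ∈ tsupport w, x ∈ Metric.ball (0 : V) 1 := fun x hx => (hsupp hx).1
  have hgc : Continuous (gradient w) :=
    (InnerProductSpace.toDual ℝ V).symm.continuous.comp (hw1.continuous_fderiv (by norm_num))
  have hflux0 : ∀ x ∉ tsupport w, fluxDensity R w x = 0 := fun x hx => by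
    simp [fluxDensity, hw0 x hx]
  have hflux : ContDiff ℝ 1 (fluxDensity R w) := by
    refine contDiff_iff_contDiffAt.2 fun x => ?_
    by_cases hx : x ∈ tsupport w
    · have hn : ‖x‖ ^ 2 ≠ 0 := pow_ne_zero 2 (norm_ne_zero_iff.2 (hne x hx))
      have hi : ContDiffAt ℝ 1 (fun y : V => (‖y‖ ^ 2)⁻¹) x := (contDiff_norm_sq ℝ).contDiffAt.inv hn
      exact (hw1.contDiffAt.pow 2).mul
        (((contDiffAt_E1 hR (hne x hx)).inv (E1_pos_s11 hR (hball x hx)).ne').mul (hi.mul hi))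
    · refine (contDiffAt_const (c := (0 : ℝ))).congr_of_eventuallyEq ?_
      filter_upwards [(isClosed_tsupport w).isOpen_compl.mem_nhds hx] with y hy
      exact hflux0 y hy
  have hfluxc : HasCompactSupport (fluxDensity R w) := HasCompactSupport.intro hcpt hflux0
  have hA : Integrable (fun x : V => ‖gradient w x‖ ^ 2 / ‖x‖ ^ 2) := by
    refine integrable_of_tsupport hcpt (fun x hx => ?_) (fun x hx => ?_)
    · exact (hgc.norm.pow 2).continuousAt.div (continuous_norm.pow 2).continuousAt
        (pow_ne_zero 2 (norm_ne_zero_iff.2 (hne x hx)))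
    · have : fderiv ℝ w x = 0 :=
        image_eq_zero_of_notMem_tsupport fun h => hx (tsupport_fderiv_subset ℝ h)
      simp [gradient, this]
  have hB : Integrable (fun x : V => (w x) ^ 2 / (‖x‖ ^ 4 * (E1 (‖x‖ / R)) ^ 2)) := by
    refine integrable_of_tsupport hcpt (fun x hx => ?_) (fun x hx => by simp [hw0 x hx])
    exact (hw1.continuous.pow 2).continuousAt.div
      ((continuous_norm.pow 4).continuousAt.mul ((contDiffAt_E1 hR (hne x hx)).continuousAt.pow 2))
      (mul_ne_zero (pow_ne_zero 4 (norm_ne_zero_iff.2 (hne x hx)))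
        (pow_ne_zero 2 (E1_pos_s11 hR (hball x hx)).ne'))
  have hfd0 : ∀ x ∉ tsupport w, fderiv ℝ (fluxDensity R w) x = 0 := fun x hx => by
    have hsub : tsupport (fluxDensity R w) ⊆ tsupport w :=
      closure_minimal (fun y hy => by_contra fun h => hy (hflux0 y h)) (isClosed_tsupport w)
    exact image_eq_zero_of_notMem_tsupport fun h => hx (hsub (tsupport_fderiv_subset ℝ h))
  have hG : Integrable
      (fun x : V => fderiv ℝ (fluxDensity R w) x x + 4 * fluxDensity R w x) := by
    have h1 := hflux.continuous_fderiv (by norm_num)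
    have h2 := hflux.continuous
    exact integrable_of_tsupport hcpt (fun x _ => by fun_prop)
      (fun x hx => by simp [hfd0 x hx, hflux0 x hx])
  have hG0 : ∫ x in Metric.ball (0 : V) 1,
      (fderiv ℝ (fluxDensity R w) x x + 4 * fluxDensity R w x) = 0 := by
    rw [setIntegral_eq_integral_of_forall_compl_eq_zero, integral_euler_eq_zero hflux hfluxc]
    intro x hx
    have hx' : x ∉ tsupport w := fun h => hx (hball x h)
    simp [hfd0 x hx', hflux0 x hx']
  have hAB : Integrable (fun x : V => ‖gradient w x‖ ^ 2 / ‖x‖ ^ 2 -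
      1 / 4 * ((w x) ^ 2 / (‖x‖ ^ 4 * (E1 (‖x‖ / R)) ^ 2))) := hA.sub (hB.const_mul _)
  rw [setIntegral_congr_fun Metric.isOpen_ball.measurableSet fun x hx =>
      pointwise_identity hR (hw1.differentiable (by norm_num) x) hx,
    integral_add hAB.integrableOn (hG.integrableOn.const_mul _),
    integral_sub hA.integrableOn (hB.integrableOn.const_mul _), integral_const_mul,
    integral_const_mul, hG0]
  ring
end

section
/- Let Ω be a bounded domain in ℝ⁴ containing the origin and let R ≥ R_Ω. Suppose there exist a constant D > 0 and a real number γ such that ∫_Ω (Δu)² dx − ∫_Ω u(x)² / ( |x|⁴ · E₁(|x|/R)² ) dx ≥ D · ∫_Ω u(x)² / ( |x|⁴ · E₁(|x|/R)² · E₂(|x|/R)^γ ) dx for all u ∈ C₀^∞(Ω \ {0}). Then γ ≥ 2, and if γ = 2 then D ≤ 1. In particular, the constant 1 in the remainder term of the critical Rellich inequality with weight E₂(|x|/R)^{−2} is sharp. -/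
/-!
Only radial functions are tested. With `s = E₁(|x|/R) = 1 - ln (|x|/R)` and `u(x) = w(s)` one has
`Δu = (w'' - 2w') / |x|²`, and the measure `dx / |x|⁴` becomes a constant multiple of `ds`. For `w`
supported far to the right (that is, `u` supported near the origin, but away from it) the assumed
inequality therefore reads (`ineq_one`)
`D ∫ w² / (s² (1 + ln s)^γ) ≤ ∫ (w'' - 2w')² - ∫ w² / s²`.

Next, the ground state substitution `w(s) = √s v(1 + ln s)` is applied twice, the second time as
`v(τ) = √τ f(1 + ln τ)`. Because cross terms `∫ f f'` vanish, the first use turns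
`4 ∫ w'² - ∫ w² / s²` into `4 ∫ v'²`, and the second turns this into `∫ f² + 4 ∫ f'²`. The
left-hand side becomes `D ∫ f² e^{(2 - γ)(σ - 1)} dσ`, and the second-order term `∫ w''²` carries a
factor `e^{-2(τ - 1)}`, so that it is `O(a⁻²)` when `f` is supported in `[a, b]` (`error_bound`).
This gives `ineq_two`.

Finally (`concl`), a bump `χ` is translated by `M → ∞`. If `γ < 2`, the left-hand side blows up while
the right-hand side stays bounded, which is absurd. If `γ = 2`, the error term disappears and
`(D - 1) ∫ f² ≤ 4 ∫ f'²` for every test function `f`; dilating `f = χ(·/N)` with `N → ∞` yields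
`D ≤ 1`.
-/

open MeasureTheory Real

open Set Filter Topology
open scoped ContDiff

/-! ### One-dimensional test functions -/

/-- Smooth functions on the line vanishing outside `[a, b]`. The interval is part of the data since
the location of the support has to be followed through the changes of variables. -/
structure Test (a b : ℝ) (f : ℝ → ℝ) : Prop where
  smooth : ContDiff ℝ ∞ f
  zero : ∀ x, x ∉ Icc a b → f x = 0

namespace Test
variable {a b : ℝ} {f : ℝ → ℝ}

lemma tsupport_subset (h : Test a b f) : tsupport f ⊆ Icc a b :=
  closure_minimal (fun x hx => by by_contra hc; exact hx (h.zero x hc)) isClosed_Icc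

lemma hasCompactSupport (h : Test a b f) : HasCompactSupport f :=
  HasCompactSupport.intro isCompact_Icc h.zero

lemma deriv (h : Test a b f) : Test a b (deriv f) where
  smooth := ((contDiff_infty_iff_deriv (𝕜 := ℝ)).1 h.smooth).2
  zero x hx := by
    by_contra hc
    exact hx (h.tsupport_subset (support_deriv_subset hc))

lemma hasDerivAt (h : Test a b f) (x : ℝ) : HasDerivAt f (_root_.deriv f x) x :=
  (h.smooth.differentiable (by simp)).differentiableAt.hasDerivAt

lemma continuous (h : Test a b f) : Continuous f := h.smooth.continuous

lemma integrable_mul (h : Test a b f) {g : ℝ → ℝ} (hg : Continuous g) :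
    Integrable (fun x => f x * g x) :=
  (h.continuous.mul hg).integrable_of_hasCompactSupport h.hasCompactSupport.mul_right

lemma integrable_sq (h : Test a b f) : Integrable (fun x => f x ^ 2) := by
  simpa [sq] using h.integrable_mul h.continuous

lemma integral_cross (h : Test a b f) : ∫ x, f x * _root_.deriv f x = 0 := by
  have := integral_eq_zero_of_hasDerivAt_of_integrable (f := fun x => f x ^ 2 / 2)
    (f' := fun x => f x * _root_.deriv f x)
    (fun x => (((h.hasDerivAt x).pow 2).div_const 2).congr_deriv (by norm_num; ring))
    (h.integrable_mul h.deriv.continuous) (h.integrable_sq.div_const 2)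
  exact this

/-- The cross term `2pq ∫ f f'` drops out of the expansion of `∫ (p f' + q f)²`. -/
lemma integral_comb (h : Test a b f) (p q : ℝ) :
    ∫ x, (p * _root_.deriv f x + q * f x) ^ 2
      = p ^ 2 * (∫ x, _root_.deriv f x ^ 2) + q ^ 2 * ∫ x, f x ^ 2 := by
  have e : ∀ x, (p * _root_.deriv f x + q * f x) ^ 2 = p ^ 2 * _root_.deriv f x ^ 2
      + q ^ 2 * f x ^ 2 + 2 * p * q * (f x * _root_.deriv f x) := fun x => by ring
  simp_rw [e]
  rw [integral_add, integral_add, integral_const_mul, integral_const_mul, integral_const_mul,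
    h.integral_cross]
  · ring
  · exact h.deriv.integrable_sq.const_mul _
  · exact h.integrable_sq.const_mul _
  · exact (h.deriv.integrable_sq.const_mul _).add (h.integrable_sq.const_mul _)
  · exact (h.integrable_mul h.deriv.continuous).const_mul _
end Test

/-! ### The ground state substitution -/

/-- The substitution `f ↦ √s f(1 + ln s)`, adapted to the optimal function `√s` of the Hardy
inequality `4 ∫ w'² ≥ ∫ w² / s²`. For `s ≤ 0` the value is `0`, since then `√s = 0`. -/
noncomputable def lift (f : ℝ → ℝ) (s : ℝ) : ℝ := √s * f (1 + Real.log s)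

section lift
variable {a b : ℝ} {f : ℝ → ℝ}

lemma lift_deriv (h : Test a b f) {s : ℝ} (hs : 0 < s) :
    deriv (lift f) s = (f (1 + Real.log s) / 2 + deriv f (1 + Real.log s)) / √s := by
  have h1 : HasDerivAt (fun s => 1 + Real.log s) (s⁻¹) s :=
    (Real.hasDerivAt_log hs.ne').const_add 1
  have h2 := (Real.hasDerivAt_sqrt hs.ne').mul ((h.hasDerivAt (1 + Real.log s)).comp s h1)
  have h3 : deriv (lift f) s = _ := h2.deriv
  rw [h3]
  have := Real.sq_sqrt hs.le
  have hp := Real.sqrt_pos.2 hs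
  simp only [Function.comp]
  rw [show s⁻¹ = (√s ^ 2)⁻¹ by rw [this]]
  field_simp

lemma lift_deriv2 (h : Test a b f) {s : ℝ} (hs : 0 < s) :
    deriv (deriv (lift f)) s
      = (deriv (deriv f) (1 + Real.log s) - f (1 + Real.log s) / 4) / (√s * s) := by
  have he : deriv (lift f) =ᶠ[𝓝 s]
      fun s => (f (1 + Real.log s) / 2 + deriv f (1 + Real.log s)) / √s := by
    filter_upwards [Ioi_mem_nhds hs] with t ht using lift_deriv h ht
  rw [he.deriv_eq]
  have h1 : HasDerivAt (fun s => 1 + Real.log s) (s⁻¹) s :=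
    (Real.hasDerivAt_log hs.ne').const_add 1
  have hp := Real.sqrt_pos.2 hs
  have h2 := ((((h.hasDerivAt (1 + Real.log s)).comp s h1).div_const 2).add
    ((h.deriv.hasDerivAt (1 + Real.log s)).comp s h1)).div (Real.hasDerivAt_sqrt hs.ne') hp.ne'
  refine Eq.trans h2.deriv ?_
  have := Real.sq_sqrt hs.le
  simp only [Function.comp, Pi.add_apply]
  rw [show s⁻¹ = (√s ^ 2)⁻¹ by rw [this], show √s * s = √s * √s ^ 2 by rw [this]]
  field_simp
  ring

lemma lift_test (h : Test a b f) : Test (exp (a - 1)) (exp (b - 1)) (lift f) := by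
  have hz : ∀ x, x ∉ Icc (exp (a - 1)) (exp (b - 1)) → lift f x = 0 := by
    intro x hx
    rcases le_or_gt x 0 with h0 | h0
    · simp [lift, Real.sqrt_eq_zero_of_nonpos h0]
    · rw [lift, h.zero, mul_zero]
      intro hc
      apply hx
      constructor
      · rw [← Real.le_log_iff_exp_le h0]; linarith [hc.1]
      · rw [← Real.log_le_iff_le_exp h0]; linarith [hc.2]
  refine ⟨contDiff_iff_contDiffAt.2 fun x => ?_, hz⟩
  rcases le_or_gt x 0 with h0 | h0
  · have : lift f =ᶠ[𝓝 x] fun _ => 0 := by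
      filter_upwards [Iio_mem_nhds (h0.trans_lt (exp_pos (a - 1)))] with y hy
      exact hz y fun hc => absurd hc.1 (not_le.2 hy)
    exact contDiffAt_const.congr_of_eventuallyEq this
  · exact (Real.contDiffAt_sqrt h0.ne').mul
      (h.smooth.contDiffAt.comp x (contDiffAt_const.add (Real.contDiffAt_log.2 h0.ne')))

/-- The change of variables `s = exp (t - 1)`, inverse to `t = 1 + ln s`. -/
lemma integral_exp_sub (g : ℝ → ℝ) (hg : ∀ s ≤ 0, g s = 0) :
    ∫ s, g s = ∫ t, exp (t - 1) * g (exp (t - 1)) := by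
  have h1 : ∫ s, g s = ∫ s in Ioi 0, g s :=
    (setIntegral_eq_integral_of_forall_compl_eq_zero fun x hx => hg x (not_lt.1 hx)).symm
  have him : (fun t : ℝ => exp (t - 1)) '' univ = Ioi 0 := by
    ext y; constructor
    · rintro ⟨t, -, rfl⟩; exact exp_pos _
    · intro hy; exact ⟨1 + Real.log y, trivial, by simp [Real.exp_log hy]⟩
  rw [h1, ← him, integral_image_eq_integral_abs_deriv_smul MeasurableSet.univ
    (f' := fun t => exp (t - 1))]
  · simp
  · intro x _
    have := (Real.hasDerivAt_exp (x - 1)).comp x ((hasDerivAt_id x).sub_const 1)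
    simpa [Function.comp_def] using this.hasDerivWithinAt (s := univ)
  · intro x _ y _ hxy; simpa using hxy

/-- The change of variables `r = R exp (1 - s)`, inverse to `s = 1 - ln (r / R)`. -/
lemma integral_R_exp {R : ℝ} (hR : 0 < R) (G : ℝ → ℝ) :
    ∫ r in Ioi (0:ℝ), r⁻¹ * G (1 - Real.log (r / R)) = ∫ s, G s := by
  have him : (fun t : ℝ => R * exp (1 - t)) '' univ = Ioi 0 := by
    ext y; constructor
    · rintro ⟨t, -, rfl⟩; exact mul_pos hR (exp_pos _)
    · intro hy
      have hy : 0 < y := hy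
      refine ⟨1 - Real.log (y / R), trivial, ?_⟩
      simp [Real.exp_log (div_pos hy hR)]; field_simp
  rw [← him, integral_image_eq_integral_abs_deriv_smul MeasurableSet.univ
    (f' := fun t => - (R * exp (1 - t)))]
  · rw [setIntegral_univ]
    congr 1; ext s
    have : R * exp (1 - s) / R = exp (1 - s) := by field_simp
    simp only [this, Real.log_exp, abs_neg, abs_of_pos (mul_pos hR (exp_pos (1 - s))), smul_eq_mul]
    rw [← mul_assoc, mul_inv_cancel₀ (mul_pos hR (exp_pos _)).ne']; simp
  · intro x _
    have := ((Real.hasDerivAt_exp (1 - x)).comp x ((hasDerivAt_id x).const_sub 1)).const_mul R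
    simpa [Function.comp_def] using this.hasDerivWithinAt (s := univ)
  · intro x _ y _ hxy; simpa [hR.ne'] using hxy
end lift

/-! ### The Laplacian of a radial function -/

section radial
abbrev E4 := EuclideanSpace ℝ (Fin 4)

lemma fderiv_radial {F : ℝ → ℝ} (hF : ContDiff ℝ ∞ F) (x : E4) (i : Fin 4) :
    fderiv ℝ (fun y : E4 => F (‖y‖ ^ 2)) x (EuclideanSpace.single i 1)
      = deriv F (‖x‖ ^ 2) * (2 * x i) := by
  have h1 := (hasStrictFDerivAt_norm_sq x).hasFDerivAt
  have h2 := ((hF.differentiable (by simp)).differentiableAt (x := ‖x‖ ^ 2)).hasDerivAt.comp_hasFDerivAt x h1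
  have h3 : fderiv ℝ (fun y : E4 => F (‖y‖ ^ 2)) x = _ := h2.fderiv
  rw [h3]
  simp [EuclideanSpace.inner_single_right]

/-- Radial functions are written as functions of `‖x‖²`, which is smooth also at the origin. -/
lemma lap_radial_s13 {F : ℝ → ℝ} (hF : ContDiff ℝ ∞ F) (x : E4) :
    lap (fun y : E4 => F (‖y‖ ^ 2)) x
      = 4 * ‖x‖ ^ 2 * deriv (deriv F) (‖x‖ ^ 2) + 8 * deriv F (‖x‖ ^ 2) := by
  have hF' : ContDiff ℝ ∞ (deriv F) := ((contDiff_infty_iff_deriv (𝕜 := ℝ)).1 hF).2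
  have key : ∀ i : Fin 4, fderiv ℝ (fun y : E4 => deriv F (‖y‖ ^ 2) * (2 * y i)) x
      (EuclideanSpace.single i 1) = deriv (deriv F) (‖x‖ ^ 2) * (4 * x i ^ 2)
        + 2 * deriv F (‖x‖ ^ 2) := by
    intro i
    have h1 : DifferentiableAt ℝ (fun y : E4 => deriv F (‖y‖ ^ 2)) x :=
      ((hF'.comp (contDiff_norm_sq ℝ)).differentiable (by simp)).differentiableAt
    have h2 : HasFDerivAt (fun y : E4 => 2 * y i)
        ((2:ℝ) • (EuclideanSpace.proj i : E4 →L[ℝ] ℝ)) x :=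
      (EuclideanSpace.proj (𝕜 := ℝ) i : E4 →L[ℝ] ℝ).hasFDerivAt.const_mul 2
    have h3 : fderiv ℝ (fun y : E4 => deriv F (‖y‖ ^ 2) * (2 * y i)) x = _ :=
      (h1.hasFDerivAt.mul h2).fderiv
    rw [h3]
    simp only [_root_.add_apply, _root_.smul_apply,
      fderiv_radial hF' x i]
    simp
    ring
  unfold lap
  simp_rw [fderiv_radial hF, key, Finset.sum_add_distrib, ← Finset.mul_sum]
  rw [EuclideanSpace.norm_sq_eq]
  simp
  ring
end radial

/-! ### Reduction to one dimension -/

section ineq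
/-- For `q = ‖x‖²` the function `q ↦ w (1 - ln (q / R²) / 2)` is `w (1 - ln (‖x‖ / R))`. It vanishes
near `q = 0` because `w` vanishes near `+∞`; at `q = 0` itself the junk value `log 0 = 0` gives
`w 1`, which is zero as `1 < a`. -/
lemma profile_zero {a b R : ℝ} {w : ℝ → ℝ} (h : Test a b w) (ha : 1 < a) (hR : 0 < R) :
    (fun q => w (1 - Real.log (q / R ^ 2) / 2)) =ᶠ[𝓝 0] fun _ => 0 := by
  have hpos : 0 < R ^ 2 * exp (2 * (1 - b)) := by positivity
  filter_upwards [Metric.ball_mem_nhds (0:ℝ) hpos] with q hq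
  apply h.zero
  rcases eq_or_ne q 0 with rfl | h0
  · simp only [zero_div, Real.log_zero, sub_zero]
    exact fun hc => absurd hc.1 (not_le.2 ha)
  · intro hc
    have h1 : |q / R ^ 2| < exp (2 * (1 - b)) := by
      rw [abs_div, abs_of_pos (by positivity : 0 < R ^ 2), div_lt_iff₀ (by positivity), mul_comm]
      simpa using hq
    have h2 : Real.log (q / R ^ 2) < 2 * (1 - b) := by
      rw [← Real.log_abs]
      exact (Real.log_lt_iff_lt_exp (by positivity)).2 h1
    linarith [hc.2]

lemma profile_smooth {a b R : ℝ} {w : ℝ → ℝ} (h : Test a b w) (ha : 1 < a) (hR : 0 < R) :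
    ContDiff ℝ ∞ (fun q => w (1 - Real.log (q / R ^ 2) / 2)) := by
  refine contDiff_iff_contDiffAt.2 fun q => ?_
  rcases eq_or_ne q 0 with rfl | h0
  · exact contDiffAt_const.congr_of_eventuallyEq (profile_zero h ha hR)
  · have h1 : q / R ^ 2 ≠ 0 := div_ne_zero h0 (by positivity)
    have h2 : ContDiffAt ℝ ∞ (fun q => Real.log (q / R ^ 2)) q :=
      (contDiffAt_id.div_const _).log h1
    exact h.smooth.contDiffAt.comp q (contDiffAt_const.sub (h2.div_const 2))

lemma profile_deriv {a b R : ℝ} {w : ℝ → ℝ} (h : Test a b w) (hR : 0 < R) {q : ℝ} (hq : 0 < q) :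
    HasDerivAt (fun q => w (1 - Real.log (q / R ^ 2) / 2))
      (-(deriv w (1 - Real.log (q / R ^ 2) / 2)) / (2 * q)) q := by
  have h1 : q / R ^ 2 ≠ 0 := div_ne_zero hq.ne' (by positivity)
  have h2 := ((((hasDerivAt_id q).div_const (R ^ 2)).log h1).div_const 2).const_sub 1
  refine ((h.hasDerivAt _).comp q h2).congr_deriv ?_
  simp only [id]
  field_simp

lemma profile_lap {a b R : ℝ} {w : ℝ → ℝ} (h : Test a b w) (ha : 1 < a) (hR : 0 < R) (x : E4) :
    lap (fun y : E4 => w (1 - Real.log (‖y‖ / R))) x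
      = (deriv (deriv w) (1 - Real.log (‖x‖ / R)) - 2 * deriv w (1 - Real.log (‖x‖ / R)))
        / ‖x‖ ^ 2 := by
  set F : ℝ → ℝ := fun q => w (1 - Real.log (q / R ^ 2) / 2) with hF
  have hlog : ∀ r : ℝ, Real.log (r ^ 2 / R ^ 2) / 2 = Real.log (r / R) := by
    intro r; rw [← div_pow, Real.log_pow]; push_cast; ring
  have e : (fun y : E4 => w (1 - Real.log (‖y‖ / R))) = fun y : E4 => F (‖y‖ ^ 2) := by
    ext y; simp only [hF, hlog]
  rw [e, lap_radial_s13 (profile_smooth h ha hR)]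
  rcases eq_or_ne x 0 with rfl | hx
  · have : deriv F 0 = 0 := by rw [(profile_zero h ha hR).deriv_eq]; simp
    rw [norm_zero, zero_pow two_ne_zero, this]; simp
  · have hx : 0 < ‖x‖ := norm_pos_iff.2 hx
    have hq : 0 < ‖x‖ ^ 2 := by positivity
    have d1 : deriv F =ᶠ[𝓝 (‖x‖ ^ 2)]
        fun q => -(deriv w (1 - Real.log (q / R ^ 2) / 2)) / (2 * q) := by
      filter_upwards [Ioi_mem_nhds hq] with t ht using (profile_deriv h hR ht).deriv
    have d2 := ((profile_deriv h.deriv hR hq).neg.div ((hasDerivAt_id (‖x‖ ^ 2)).const_mul 2)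
      (by simpa using hx.ne'))
    have d3 : deriv (deriv F) (‖x‖ ^ 2) = _ := d1.deriv_eq.trans d2.deriv
    rw [d3, d1.eq_of_nhds]
    simp only [hlog, id, Pi.neg_apply]
    field_simp
    ring

/-- Polar coordinates followed by `s = 1 - ln (‖x‖ / R)`. The bound on `a` says that the integrand
is supported in the ball of radius `ρ`, hence in `Ω`. -/
lemma integral_radial {Ω : Set E4} {a b R ρ : ℝ} (hR : 0 < R) (ha : 1 - Real.log (ρ / R) < a)
    (hρ : 0 < ρ) (hΩ : ∀ x ∉ Ω, ρ ≤ ‖x‖) (G : ℝ → ℝ) (hG : ∀ s, s ∉ Icc a b → G s = 0) :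
    ∫ x in Ω, G (1 - Real.log (‖x‖ / R)) / ‖x‖ ^ 4
      = 4 * volume.real (Metric.ball (0 : E4) 1) * ∫ s, G s := by
  rw [setIntegral_eq_integral_of_forall_compl_eq_zero]
  · rw [integral_fun_norm_addHaar volume (fun r => G (1 - Real.log (r / R)) / r ^ 4)]
    rw [← integral_R_exp hR]
    simp only [finrank_euclideanSpace, Fintype.card_fin, smul_eq_mul, nsmul_eq_mul]
    push_cast
    rw [mul_assoc]
    congr 2
    refine setIntegral_congr_fun measurableSet_Ioi fun r hr => ?_
    have hr : 0 < r := hr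
    field_simp
  · intro x hx
    rw [hG, zero_div]
    intro hc
    have h1 := hΩ x hx
    have : Real.log (ρ / R) ≤ Real.log (‖x‖ / R) :=
      Real.log_le_log (by positivity) (by gcongr)
    linarith [hc.1]

/-- The Rellich-type inequality tested on `u(x) = w(E₁(‖x‖ / R))`; the common factor
`4 vol(B₁)`, the area of the unit sphere, cancels. -/
lemma ineq_one (Ω : Set E4) (R D γ ρ : ℝ) (hR : 0 < R) (hρ : 0 < ρ)
    (hΩ : ∀ x ∉ Ω, ρ ≤ ‖x‖)
    (hineq : ∀ u : E4 → ℝ,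
      ContDiff ℝ (⊤ : ℕ∞) u → HasCompactSupport u → tsupport u ⊆ Ω \ {0} →
      D * (∫ x in Ω, (u x) ^ 2 /
            (‖x‖ ^ 4 * (E1 (‖x‖ / R)) ^ 2 * (E2 (‖x‖ / R)) ^ γ)) ≤
        (∫ x in Ω, (lap u x) ^ 2) -
          ∫ x in Ω, (u x) ^ 2 / (‖x‖ ^ 4 * (E1 (‖x‖ / R)) ^ 2))
    {a b : ℝ} (ha1 : 1 < a) (ha : 1 - Real.log (ρ / R) < a) {w : ℝ → ℝ} (h : Test a b w) :
    D * (∫ s, w s ^ 2 / (s ^ 2 * (1 + Real.log s) ^ γ)) ≤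
      (∫ s, (deriv (deriv w) s - 2 * deriv w s) ^ 2) - ∫ s, w s ^ 2 / s ^ 2 := by
  set u : E4 → ℝ := fun y => w (1 - Real.log (‖y‖ / R)) with hu
  have hC : 0 < 4 * volume.real (Metric.ball (0 : E4) 1) := by
    have : 0 < volume.real (Metric.ball (0 : E4) 1) :=
      ENNReal.toReal_pos (Metric.measure_ball_pos _ _ one_pos).ne' measure_ball_lt_top.ne
    positivity
  have usmooth : ContDiff ℝ ∞ u := by
    have : u = (fun q => w (1 - Real.log (q / R ^ 2) / 2)) ∘ fun y : E4 => ‖y‖ ^ 2 := by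
      ext y
      simp only [hu, Function.comp]
      rw [← div_pow, Real.log_pow]; push_cast; congr 2; ring
    rw [this]
    exact (profile_smooth h ha1 hR).comp (contDiff_norm_sq ℝ)
  have hK : ∀ x : E4, u x ≠ 0 → R * exp (1 - b) ≤ ‖x‖ ∧ ‖x‖ ≤ R * exp (1 - a) := by
    intro x hx
    have hs : 1 - Real.log (‖x‖ / R) ∈ Icc a b := by
      by_contra hc; exact hx (h.zero _ hc)
    have hx0 : 0 < ‖x‖ := by
      rcases (norm_nonneg x).eq_or_lt with h0 | h0
      · rw [← h0] at hs; simp at hs; linarith [hs.1]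
      · exact h0
    have hp : 0 < ‖x‖ / R := by positivity
    constructor
    · rw [mul_comm, ← le_div_iff₀ hR, ← Real.le_log_iff_exp_le hp]; linarith [hs.2]
    · rw [mul_comm, ← div_le_iff₀ hR, ← Real.log_le_iff_le_exp hp]; linarith [hs.1]
  -- This closed annulus contains the support of `u`, lies in `Ω` and misses the origin.
  have hcl : IsClosed {x : E4 | R * exp (1 - b) ≤ ‖x‖ ∧ ‖x‖ ≤ R * exp (1 - a)} :=
    (isClosed_le continuous_const continuous_norm).inter
      (isClosed_le continuous_norm continuous_const)
  have hts : tsupport u ⊆ {x : E4 | R * exp (1 - b) ≤ ‖x‖ ∧ ‖x‖ ≤ R * exp (1 - a)} :=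
    closure_minimal (fun x hx => hK x hx) hcl
  have hcomp : HasCompactSupport u := by
    refine HasCompactSupport.of_support_subset_isCompact
      (isCompact_closedBall (0 : E4) (R * exp (1 - a))) fun x hx => ?_
    simpa using (hK x hx).2
  have hsub : tsupport u ⊆ Ω \ {0} := by
    intro x hx
    obtain ⟨h1, h2⟩ := hts hx
    constructor
    · by_contra hc
      have h3 := (hΩ x hc).trans h2
      rw [mul_comm, ← div_le_iff₀ hR, ← Real.log_le_iff_le_exp (by positivity)] at h3
      linarith
    · rintro rfl
      simp only [norm_zero] at h1
      have : 0 < R * exp (1 - b) := by positivity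
      linarith
  have key := hineq u usmooth hcomp hsub
  have i1 := integral_radial hR ha hρ hΩ (fun s => w s ^ 2 / (s ^ 2 * (1 + Real.log s) ^ γ))
    (b := b) (fun s hs => by simp [h.zero s hs])
  have i2 := integral_radial hR ha hρ hΩ (fun s => (deriv (deriv w) s - 2 * deriv w s) ^ 2)
    (b := b) (fun s hs => by simp [h.deriv.zero s hs, h.deriv.deriv.zero s hs])
  have i3 := integral_radial hR ha hρ hΩ (fun s => w s ^ 2 / s ^ 2)
    (b := b) (fun s hs => by simp [h.zero s hs])
  have e1 : ∀ x : E4, (u x) ^ 2 / (‖x‖ ^ 4 * (E1 (‖x‖ / R)) ^ 2 * (E2 (‖x‖ / R)) ^ γ)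
      = w (1 - Real.log (‖x‖ / R)) ^ 2 / ((1 - Real.log (‖x‖ / R)) ^ 2 *
        (1 + Real.log (1 - Real.log (‖x‖ / R))) ^ γ) / ‖x‖ ^ 4 := by
    intro x; rw [div_div]; simp only [hu, E1, E2]; congr 1; ring
  have e2 : ∀ x : E4, (lap u x) ^ 2 = (deriv (deriv w) (1 - Real.log (‖x‖ / R))
      - 2 * deriv w (1 - Real.log (‖x‖ / R))) ^ 2 / ‖x‖ ^ 4 := by
    intro x; rw [profile_lap h ha1 hR x, div_pow]; congr 1; ring
  have e3 : ∀ x : E4, (u x) ^ 2 / (‖x‖ ^ 4 * (E1 (‖x‖ / R)) ^ 2)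
      = w (1 - Real.log (‖x‖ / R)) ^ 2 / (1 - Real.log (‖x‖ / R)) ^ 2 / ‖x‖ ^ 4 := by
    intro x; rw [div_div]; simp only [hu, E1]; congr 1; ring
  simp_rw [e1, e2, e3] at key
  rw [i1, i2, i3] at key
  rw [← mul_sub, mul_left_comm] at key
  exact le_of_mul_le_mul_left key hC
end ineq

/-! ### The inequality after two ground state substitutions -/

section reduce
variable {a b : ℝ} {f : ℝ → ℝ}

lemma sqrt_exp_sub (t : ℝ) : √(exp (t - 1)) ^ 2 = exp (t - 1) := Real.sq_sqrt (exp_pos _).le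

lemma integral_lift_mul (h : Test a b f) (k : ℝ → ℝ) :
    ∫ s, lift f s ^ 2 * k s = ∫ t, f t ^ 2 * (exp (t - 1) ^ 2 * k (exp (t - 1))) := by
  rw [integral_exp_sub]
  · congr 1; ext t
    rw [lift, mul_pow, sqrt_exp_sub, Real.log_exp, add_sub_cancel]
    ring
  · intro s hs
    rw [(lift_test h).zero s fun hc => absurd (hc.1.trans hs) (not_le.2 (exp_pos _))]
    ring

lemma integral_lift_deriv (h : Test a b f) :
    ∫ s, deriv (lift f) s ^ 2 = (∫ t, deriv f t ^ 2) + 1 / 4 * ∫ t, f t ^ 2 := by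
  rw [integral_exp_sub]
  · have := h.integral_comb 1 (1 / 2)
    norm_num at this
    norm_num
    rw [← this]
    congr 1; ext t
    rw [lift_deriv h (exp_pos _), div_pow, sqrt_exp_sub, Real.log_exp, add_sub_cancel]
    have := exp_pos (t - 1)
    field_simp
    ring
  · intro s hs
    rw [(lift_test h).deriv.zero s fun hc => absurd (hc.1.trans hs) (not_le.2 (exp_pos _))]
    ring

lemma integral_lift_deriv2 (h : Test a b f) :
    ∫ s, deriv (deriv (lift f)) s ^ 2
      = ∫ t, (deriv (deriv f) t - f t / 4) ^ 2 * exp (-2 * (t - 1)) := by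
  rw [integral_exp_sub]
  · congr 1; ext t
    rw [lift_deriv2 h (exp_pos _), div_pow, mul_pow, sqrt_exp_sub, Real.log_exp, add_sub_cancel]
    rw [show -2 * (t - 1) = -((t - 1) + (t - 1)) by ring, Real.exp_neg, Real.exp_add]
    have := exp_pos (t - 1)
    field_simp
  · intro s hs
    rw [(lift_test h).deriv.deriv.zero s
      fun hc => absurd (hc.1.trans hs) (not_le.2 (exp_pos _))]
    ring

lemma exp_bound {T : ℝ} (hT : 1 ≤ T) : exp (-2 * (T - 1)) ≤ 16 / T ^ 4 := by
  have h1 : T / 2 ≤ exp ((T - 1) / 2) := by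
    have := Real.add_one_le_exp ((T - 1) / 2); linarith
  have h2 : (T / 2) ^ 4 ≤ exp ((T - 1) / 2) ^ 4 := by gcongr
  have h3 : exp ((T - 1) / 2) ^ 4 = exp (2 * (T - 1)) := by
    rw [← Real.exp_nat_mul]; congr 1; push_cast; ring
  rw [h3] at h2
  rw [show -2 * (T - 1) = -(2 * (T - 1)) by ring, Real.exp_neg, inv_le_comm₀ (exp_pos _) (by positivity)]
  calc _ = (T / 2) ^ 4 := by field_simp; norm_num
    _ ≤ _ := h2

/-- The contribution of `∫ w''²`, for `w = lift (lift f)`, is `O(a⁻²)`: the weight `exp (-2 (t - 1))`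
at `t = exp (σ - 1) ≥ a` absorbs all powers of `t` produced by the substitution. -/
lemma error_bound (h : Test a b f) (ha : 1 ≤ a) :
    ∫ t, (deriv (deriv (lift f)) t - lift f t / 4) ^ 2 * exp (-2 * (t - 1))
      ≤ 32 / a ^ 2 * ∫ σ, ((deriv (deriv f) σ - f σ / 4) ^ 2 + (f σ / 4) ^ 2) := by
  rw [integral_exp_sub, ← integral_const_mul]
  · have hI : Integrable fun σ => ((deriv (deriv f) σ - f σ / 4) ^ 2 + (f σ / 4) ^ 2) := by
      refine Continuous.integrable_of_hasCompactSupport ?_ ?_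
      · have := h.continuous
        have := h.deriv.deriv.continuous
        fun_prop
      · refine HasCompactSupport.intro (K := Icc a b) isCompact_Icc fun x hx => ?_
        simp [h.zero x hx, h.deriv.deriv.zero x hx]
    refine integral_mono_of_nonneg (.of_forall fun σ => by positivity) (hI.const_mul _)
      (.of_forall fun σ => ?_)
    simp only
    rw [lift_deriv2 h (exp_pos _), lift, Real.log_exp, add_sub_cancel]
    by_cases hσ : σ ∈ Icc a b
    · have hTσ : a ≤ exp (σ - 1) := by
        have := Real.add_one_le_exp (σ - 1); linarith [hσ.1]
      have hs := sqrt_exp_sub σ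
      have hp := Real.sqrt_pos.2 (exp_pos (σ - 1))
      set T := exp (σ - 1)
      set A := deriv (deriv f) σ - f σ / 4
      rw [show √T * f σ / 4 = √T * (f σ / 4) by ring]
      set B := f σ / 4
      have hT1 : 1 ≤ T := ha.trans hTσ
      have hT : 0 < T := by linarith
      have e : T * ((A / (√T * T) - √T * B) ^ 2 * exp (-2 * (T - 1)))
          = exp (-2 * (T - 1)) * (A / T - T * B) ^ 2 := by
        have : (A / (√T * T) - √T * B) = (A / T - √T ^ 2 * B) / √T := by field_simp
        rw [this, div_pow, hs]; field_simp
      rw [e]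
      have h1 : (A / T - T * B) ^ 2 ≤ 2 * T ^ 2 * (A ^ 2 + B ^ 2) := by
        have h2 : (A / T) ^ 2 ≤ T ^ 2 * A ^ 2 := by
          have : (A / T) ^ 2 ≤ A ^ 2 := by
            rw [div_pow]; exact div_le_self (sq_nonneg _) (one_le_pow₀ hT1)
          have : A ^ 2 ≤ T ^ 2 * A ^ 2 := le_mul_of_one_le_left (sq_nonneg _) (one_le_pow₀ hT1)
          linarith
        nlinarith [sq_nonneg (A / T + T * B)]
      calc _ ≤ 16 / T ^ 4 * (2 * T ^ 2 * (A ^ 2 + B ^ 2)) :=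
            mul_le_mul (exp_bound hT1) h1 (sq_nonneg _) (by positivity)
        _ = 32 / T ^ 2 * (A ^ 2 + B ^ 2) := by field_simp; ring
        _ ≤ _ := by gcongr
    · simp [h.zero σ hσ, h.deriv.deriv.zero σ hσ]
  · intro s hs
    rw [(lift_test h).deriv.deriv.zero s fun hc => absurd (hc.1.trans hs) (not_le.2 (exp_pos _)),
      (lift_test h).zero s fun hc => absurd (hc.1.trans hs) (not_le.2 (exp_pos _))]
    ring

lemma le_exp_sub (x : ℝ) : x ≤ exp (x - 1) := by
  have := Real.add_one_le_exp (x - 1); linarith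

/-- The one-dimensional inequality tested on `w = lift (lift f)`. -/
lemma ineq_two {D γ A : ℝ} (hA : 1 ≤ A)
    (H : ∀ a b w, A < a → Test a b w → D * (∫ s, w s ^ 2 / (s ^ 2 * (1 + Real.log s) ^ γ)) ≤
      (∫ s, (deriv (deriv w) s - 2 * deriv w s) ^ 2) - ∫ s, w s ^ 2 / s ^ 2)
    (h : Test a b f) (ha : A < a) :
    D * (∫ σ, f σ ^ 2 * exp ((2 - γ) * (σ - 1))) ≤
      (∫ σ, f σ ^ 2) + 4 * (∫ σ, deriv f σ ^ 2)
        + 32 / a ^ 2 * ∫ σ, ((deriv (deriv f) σ - f σ / 4) ^ 2 + (f σ / 4) ^ 2) := by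
  have hv := lift_test h
  have hw := lift_test hv
  have key := H _ _ _ (ha.trans_le ((le_exp_sub _).trans (le_exp_sub _) |>.trans
    (Real.exp_le_exp.2 (sub_le_sub_right le_rfl 1)))) hw
  have c := hw.deriv.integral_comb 1 (-2)
  have c' : ∀ s, (1 * deriv (deriv (lift (lift f))) s + -2 * deriv (lift (lift f)) s) ^ 2
    = (deriv (deriv (lift (lift f))) s - 2 * deriv (lift (lift f)) s) ^ 2 := fun s => by ring
  simp_rw [c'] at c
  rw [c, integral_lift_deriv2 hv, integral_lift_deriv hv, integral_lift_deriv h] at key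
  have i1 : ∫ s, lift (lift f) s ^ 2 / s ^ 2 = ∫ t, lift f t ^ 2 := by
    have := integral_lift_mul hv (fun s => (s ^ 2)⁻¹)
    simp only [div_eq_mul_inv]
    rw [this]
    congr 1; ext t
    rw [mul_inv_cancel₀ (by positivity), mul_one]
  have i2 : ∫ s, lift (lift f) s ^ 2 / (s ^ 2 * (1 + Real.log s) ^ γ)
      = ∫ σ, f σ ^ 2 * exp ((2 - γ) * (σ - 1)) := by
    simp only [div_eq_mul_inv]
    rw [integral_lift_mul hv (fun s => (s ^ 2 * (1 + Real.log s) ^ γ)⁻¹)]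
    have := integral_lift_mul h (fun t => (t ^ γ)⁻¹)
    rw [show (∫ t, lift f t ^ 2 * (exp (t - 1) ^ 2 * (exp (t - 1) ^ 2 *
      (1 + Real.log (exp (t - 1))) ^ γ)⁻¹)) = ∫ t, lift f t ^ 2 * (t ^ γ)⁻¹ from ?_, this]
    · congr 1; ext t
      rw [← Real.exp_mul, ← Real.exp_neg, ← Real.exp_nat_mul, ← Real.exp_add]
      congr 2; push_cast; ring
    · congr 1; ext t
      rw [Real.log_exp, add_sub_cancel, mul_inv, mul_inv_cancel_left₀ (by positivity)]
  rw [i1, i2] at key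
  have := error_bound h (hA.trans ha.le)
  linarith

/-! ### Translation and dilation of a bump -/

lemma Test.translate (h : Test a b f) (M : ℝ) : Test (a + M) (b + M) (fun x => f (x - M)) where
  smooth := h.smooth.comp (contDiff_id.sub contDiff_const)
  zero x hx := h.zero _ fun hc => hx ⟨by linarith [hc.1], by linarith [hc.2]⟩

lemma deriv_translate (f : ℝ → ℝ) (M : ℝ) :
    deriv (fun x => f (x - M)) = fun x => deriv f (x - M) := by
  ext x; exact deriv_comp_sub_const ..

/-- Translating a bump to infinity rules out `γ < 2`; dilating it afterwards gives `D ≤ 1` when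
`γ = 2`. -/
lemma concl {D γ A : ℝ} (hA : 1 ≤ A) (hD : 0 < D)
    (H : ∀ a b w, A < a → Test a b w → D * (∫ s, w s ^ 2 / (s ^ 2 * (1 + Real.log s) ^ γ)) ≤
      (∫ s, (deriv (deriv w) s - 2 * deriv w s) ^ 2) - ∫ s, w s ^ 2 / s ^ 2) :
    2 ≤ γ ∧ (γ = 2 → D ≤ 1) := by
  obtain ⟨χ, a, b, hχ, hpos⟩ : ∃ (χ : ℝ → ℝ) (a b : ℝ), Test a b χ ∧ 0 < ∫ x, χ x ^ 2 := by
    let B : ContDiffBump (0:ℝ) := ⟨1, 2, one_pos, one_lt_two⟩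
    have hT : Test (-2) 2 B := by
      refine ⟨B.contDiff, fun x hx => ?_⟩
      by_contra hc
      have : x ∈ Function.support B := hc
      rw [B.support_eq] at this
      apply hx
      rw [Real.ball_eq_Ioo] at this
      have h2 : B.rOut = 2 := rfl
      rw [h2] at this
      exact ⟨by linarith [this.1], by linarith [this.2]⟩
    refine ⟨B, -2, 2, hT, ?_⟩
    refine (hT.continuous.pow 2).integral_pos_of_hasCompactSupport_nonneg_nonzero (x := 0) ?_ ?_ ?_
    · have := hT.hasCompactSupport.mul_right (f' := B)
      simpa [sq, Pi.mul_def] using this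
    · intro x; positivity
    · have : B 0 = 1 := B.one_of_mem_closedBall (by simp [B])
      simp [this]
  have shifted : ∀ (a b : ℝ) (g : ℝ → ℝ), Test a b g → ∀ M, A < a + M →
      D * (∫ σ, g σ ^ 2 * exp ((2 - γ) * (σ + M - 1))) ≤
      (∫ σ, g σ ^ 2) + 4 * (∫ σ, deriv g σ ^ 2)
        + 32 / (a + M) ^ 2 * ∫ σ, ((deriv (deriv g) σ - g σ / 4) ^ 2 + (g σ / 4) ^ 2) := by
    intro a b g hg M hM
    have := ineq_two hA H (hg.translate M) hM
    simp only [deriv_translate] at this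
    rw [integral_sub_right_eq_self (fun x => g x ^ 2),
      integral_sub_right_eq_self (fun x => deriv g x ^ 2),
      integral_sub_right_eq_self (fun σ => ((deriv (deriv g) σ - g σ / 4) ^ 2 + (g σ / 4) ^ 2)),
      ← integral_add_right_eq_self _ M] at this
    simpa using this
  have tend0 : ∀ (a K : ℝ), Tendsto (fun M : ℝ => 32 / (a + M) ^ 2 * K) atTop (𝓝 0) := by
    intro a K
    have h1 : Tendsto (fun M : ℝ => (a + M) ^ 2) atTop atTop :=
      (tendsto_pow_atTop two_ne_zero).comp (tendsto_atTop_add_const_left _ a tendsto_id)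
    simpa using (h1.const_div_atTop 32).mul_const K
  constructor
  · by_contra! hγ
    have hev := (eventually_gt_atTop (A - a)).mono fun M hM =>
      shifted a b χ hχ M (by linarith)
    have hlow : ∀ M, exp ((2 - γ) * (a + M - 1)) * ∫ σ, χ σ ^ 2
        ≤ ∫ σ, χ σ ^ 2 * exp ((2 - γ) * (σ + M - 1)) := by
      intro M
      rw [← integral_const_mul]
      refine integral_mono (hχ.integrable_sq.const_mul _) ?_ fun σ => ?_
      · have := hχ.integrable_mul (g := fun σ => χ σ * exp ((2 - γ) * (σ + M - 1)))
          (by have := hχ.continuous; fun_prop)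
        simpa [sq, mul_assoc] using this
      · simp only
        rw [mul_comm]
        by_cases hσ : σ ∈ Icc a b
        · have := hσ.1
          have h2 : 0 ≤ 2 - γ := by linarith
          gcongr
        · simp [hχ.zero σ hσ]
    have t1 : Tendsto (fun M : ℝ => D * (exp ((2 - γ) * (a + M - 1)) * ∫ σ, χ σ ^ 2))
        atTop atTop := by
      refine Tendsto.const_mul_atTop hD (Tendsto.atTop_mul_const hpos
        (Real.tendsto_exp_atTop.comp (Tendsto.const_mul_atTop (by linarith) ?_)))
      exact tendsto_atTop_add_const_right _ _ (tendsto_atTop_add_const_left _ a tendsto_id)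
    have t2 := ((tend0 a (∫ σ, ((deriv (deriv χ) σ - χ σ / 4) ^ 2 + (χ σ / 4) ^ 2))).const_add
      ((∫ σ, χ σ ^ 2) + 4 * (∫ σ, deriv χ σ ^ 2)))
    have t3 := tendsto_atTop_mono' atTop (hev.mono fun M hM =>
      (mul_le_mul_of_nonneg_left (hlow M) hD.le).trans hM) t1
    exact not_tendsto_nhds_of_tendsto_atTop t3 _ t2
  · rintro rfl
    have scaled : ∀ N : ℝ, 0 < N →
        D * (∫ x, χ x ^ 2) ≤ (∫ x, χ x ^ 2) + 4 * (∫ x, deriv χ x ^ 2) / N ^ 2 := by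
      intro N hN
      have hg : Test (a * N) (b * N) (fun x => χ (x / N)) := by
        refine ⟨hχ.smooth.comp (contDiff_id.div_const _), fun x hx => hχ.zero _ fun hc => hx ?_⟩
        exact ⟨(le_div_iff₀ hN).1 hc.1, (div_le_iff₀ hN).1 hc.2⟩
      have hev := (eventually_gt_atTop (A - a * N)).mono fun M hM =>
        shifted _ _ _ hg M (by linarith)
      simp only [sub_self, zero_mul, Real.exp_zero, mul_one] at hev
      -- Letting `M → ∞` removes the second-order error term.
      have hlim := ge_of_tendsto ((tend0 (a * N) _).const_add _) hev
      have hd : deriv (fun x => χ (x / N)) = fun x => deriv χ (x / N) / N := by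
        ext x
        have := (hχ.hasDerivAt (x / N)).comp x ((hasDerivAt_id x).div_const N)
        refine Eq.trans this.deriv ?_
        ring
      simp only [hd, add_zero, div_pow] at hlim
      rw [integral_div, Measure.integral_comp_div (fun x => χ x ^ 2),
        Measure.integral_comp_div (fun x => deriv χ x ^ 2), smul_eq_mul, smul_eq_mul,
        abs_of_pos hN] at hlim
      have : N * (D * ∫ x, χ x ^ 2)
          ≤ N * ((∫ x, χ x ^ 2) + 4 * (∫ x, deriv χ x ^ 2) / N ^ 2) := by
        calc _ = D * (N * ∫ x, χ x ^ 2) := by ring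
          _ ≤ _ := hlim
          _ = _ := by field_simp
      exact le_of_mul_le_mul_left this hN
    have t : Tendsto (fun N : ℝ => (∫ x, χ x ^ 2) + 4 * (∫ x, deriv χ x ^ 2) / N ^ 2) atTop
        (𝓝 ((∫ x, χ x ^ 2) + 0)) :=
      ((tendsto_pow_atTop two_ne_zero).const_div_atTop _).const_add _
    have := ge_of_tendsto t ((eventually_gt_atTop 0).mono scaled)
    rw [add_zero] at this
    by_contra! hc
    nlinarith
end reduce

/-- Sharpness of the remainder term in the critical Rellich inequality. -/
theorem stmt13 (Ω : Set (EuclideanSpace ℝ (Fin 4))) (hopen : IsOpen Ω) (hconn : IsConnected Ω)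
    (hbdd : Bornology.IsBounded Ω) (h0 : (0 : EuclideanSpace ℝ (Fin 4)) ∈ Ω)
    (R : ℝ) (hR : ∀ x ∈ Ω, ‖x‖ ≤ R) (D γ : ℝ) (hD : 0 < D)
    (hineq : ∀ u : EuclideanSpace ℝ (Fin 4) → ℝ,
      ContDiff ℝ (⊤ : ℕ∞) u → HasCompactSupport u → tsupport u ⊆ Ω \ {0} →
      D * (∫ x in Ω, (u x) ^ 2 /
            (‖x‖ ^ 4 * (E1 (‖x‖ / R)) ^ 2 * (E2 (‖x‖ / R)) ^ γ)) ≤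
        (∫ x in Ω, (lap u x) ^ 2) -
          ∫ x in Ω, (u x) ^ 2 / (‖x‖ ^ 4 * (E1 (‖x‖ / R)) ^ 2)) :
    2 ≤ γ ∧ (γ = 2 → D ≤ 1) := by
  obtain ⟨ρ, hρ, hball⟩ := Metric.isOpen_iff.1 hopen 0 h0
  have hΩ : ∀ x ∉ Ω, ρ ≤ ‖x‖ := by
    intro x hx
    by_contra! hc
    exact hx (hball (by simpa using hc))
  have hRpos : 0 < R := by
    have hn : ‖(EuclideanSpace.single 0 (ρ / 2) : E4)‖ = ρ / 2 := by
      rw [PiLp.norm_single, Real.norm_of_nonneg (by positivity)]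
    have hm : (EuclideanSpace.single 0 (ρ / 2) : E4) ∈ Ω := hball (by
      rw [mem_ball_zero_iff, hn]; linarith)
    have := hR _ hm
    rw [hn] at this
    linarith
  refine concl (A := max 1 (1 - Real.log (ρ / R))) (le_max_left _ _) hD fun a b w ha h => ?_
  exact ineq_one Ω R D γ ρ hRpos hρ hΩ hineq ((le_max_left _ _).trans_lt ha)
    ((le_max_right _ _).trans_lt ha) h
end
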